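/- Let T > 0, L > 0, 0 < a < L, A > 0 and c > 0, and let θ ∈ C²((0,T)) satisfy θ(t) ≥ 1, |θ'(t)| ≤ c θ(t)² and |θ''(t)| ≤ c θ(t)³ for every t ∈ (0,T). For ξ > 0 define ψ(t,x) = A ξ θ(t) + θ(t) − √ξ θ(t) ( (x−a)²/2 − 2L(x−a) ), F(t,x) = ∂_t ψ − (∂_x ψ)² + ξ² x², and G(t,x) = 2 ∂_x ψ · ∂_x F − ∂_t F + ∂_x⁴ ψ. Then there exists ξ₀ > 0 such that for every ξ ≥ ξ₀ and every (t,x) ∈ (0,T) × (a,L): G(t,x) ≥ 2 (L+a)² ξ^{3/2} θ(t)³. -/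

import Mathlib

open MeasureTheory Real Set

/-- The Carleman weight `ψ(t,x) = Aξθ(t) + θ(t) − √ξ θ(t)((x−a)²/2 − 2L(x−a))`. -/
noncomputable def psiW (A ξ a L : ℝ) (θ : ℝ → ℝ) (t x : ℝ) : ℝ :=
  A * ξ * θ t + θ t - Real.sqrt ξ * θ t * ((x - a) ^ 2 / 2 - 2 * L * (x - a))

/-- `F(t,x) = ∂_t ψ − (∂_x ψ)² + ξ²x²`. -/
noncomputable def Fcoef (A ξ a L : ℝ) (θ : ℝ → ℝ) (t x : ℝ) : ℝ :=
  deriv (fun s => psiW A ξ a L θ s x) t - (deriv (fun y => psiW A ξ a L θ t y) x) ^ 2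
    + ξ ^ 2 * x ^ 2

/-- `G(t,x) = 2 ∂_x ψ · ∂_x F − ∂_t F + ∂_x⁴ ψ`. -/
noncomputable def Gcoef (A ξ a L : ℝ) (θ : ℝ → ℝ) (t x : ℝ) : ℝ :=
  2 * deriv (fun y => psiW A ξ a L θ t y) x * deriv (fun y => Fcoef A ξ a L θ t y) x
    - deriv (fun s => Fcoef A ξ a L θ s x) t
    + (deriv^[4] (fun y => psiW A ξ a L θ t y)) x

/-!
The weight separates as `ψ(t,x) = θ(t) φ(x)`, with `φ` a concave quadratic, `φ' = √ξ (2L+a-x)`.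
With `m = 2L + a - x` this gives

  `G = 4ξm²θ(θ' + √ξθ²) + 4ξ²√ξθxm - θ''φ`.

On `[a, L]` one has `m ≥ L + a`, the second term is nonnegative, and `φ = O(ξ)`. As
`|θ'| ≤ cθ²` and `|θ''| ≤ cθ³`, for large `ξ` each of the terms in `θ'` and `θ''` costs at most a
quarter of the leading term `4ξ√ξm²θ³`.
-/

section

variable {A c ξ a L t x : ℝ} {θ : ℝ → ℝ}

/-- The spatial factor `φ` of the Carleman weight, `ψ(t,x) = θ(t) φ(x)`. -/
noncomputable def carlemanProfile (A ξ a L x : ℝ) : ℝ :=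
  A * ξ + 1 - √ξ * ((x - a) ^ 2 / 2 - 2 * L * (x - a))

lemma psiW_eq_mul_carlemanProfile (A ξ a L : ℝ) (θ : ℝ → ℝ) (t x : ℝ) :
    psiW A ξ a L θ t x = θ t * carlemanProfile A ξ a L x := by
  unfold psiW carlemanProfile
  ring

lemma hasDerivAt_carlemanProfile (A ξ a L x : ℝ) :
    HasDerivAt (carlemanProfile A ξ a L) (√ξ * (2 * L + a - x)) x := by
  have hsub : HasDerivAt (fun y : ℝ ↦ y - a) 1 x := (hasDerivAt_id x).sub_const a
  have hquad := ((hsub.fun_pow 2).div_const 2).fun_sub (hsub.const_mul (2 * L))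
  refine ((hquad.const_mul √ξ).const_sub (A * ξ + 1)).congr_deriv ?_
  push_cast
  ring

lemma abs_carlemanProfile_le (ha : 0 ≤ a) (hx : x ∈ Icc a L) (hξ : 1 ≤ ξ) :
    |carlemanProfile A ξ a L x| ≤ (|A| + 1 + 2 * L ^ 2) * ξ := by
  have hquad : |(x - a) ^ 2 / 2 - 2 * L * (x - a)| ≤ 2 * L ^ 2 := by
    rw [abs_le]
    constructor <;> nlinarith [hx.1, hx.2, sq_nonneg (x - a - 2 * L)]
  have hsqrt : √ξ ≤ ξ := Real.sqrt_le_self_iff.2 (.inr hξ)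
  calc |carlemanProfile A ξ a L x|
      ≤ |A * ξ| + |1| + |√ξ * ((x - a) ^ 2 / 2 - 2 * L * (x - a))| :=
        (abs_sub _ _).trans (by gcongr; exact abs_add_le _ _)
    _ = |A| * ξ + 1 + √ξ * |(x - a) ^ 2 / 2 - 2 * L * (x - a)| := by
        rw [abs_mul, abs_mul, abs_one, abs_of_nonneg (by positivity : 0 ≤ ξ),
          abs_of_nonneg ξ.sqrt_nonneg]
    _ ≤ |A| * ξ + ξ + ξ * (2 * L ^ 2) := by gcongr
    _ = (|A| + 1 + 2 * L ^ 2) * ξ := by ring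

lemma deriv_psiW_space (A ξ a L : ℝ) (θ : ℝ → ℝ) (t : ℝ) :
    deriv (fun y ↦ psiW A ξ a L θ t y) = fun x ↦ θ t * (√ξ * (2 * L + a - x)) := by
  funext x
  simp only [psiW_eq_mul_carlemanProfile]
  exact ((hasDerivAt_carlemanProfile A ξ a L x).const_mul (θ t)).deriv

lemma iterate_deriv_four_psiW_space (A ξ a L : ℝ) (θ : ℝ → ℝ) (t x : ℝ) :
    deriv^[4] (fun y ↦ psiW A ξ a L θ t y) x = 0 := by
  simp [Function.iterate_succ, deriv_psiW_space]

lemma deriv_psiW_time (A ξ a L : ℝ) (θ : ℝ → ℝ) (t x : ℝ) :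
    deriv (fun s ↦ psiW A ξ a L θ s x) t = deriv θ t * carlemanProfile A ξ a L x := by
  simp only [psiW_eq_mul_carlemanProfile]
  exact deriv_mul_const_field _

lemma Fcoef_eq (A ξ a L : ℝ) (θ : ℝ → ℝ) (t x : ℝ) :
    Fcoef A ξ a L θ t x = deriv θ t * carlemanProfile A ξ a L x
      - (θ t * (√ξ * (2 * L + a - x))) ^ 2 + ξ ^ 2 * x ^ 2 := by
  simp only [Fcoef, deriv_psiW_time, deriv_psiW_space]

lemma deriv_Fcoef_space (A ξ a L : ℝ) (θ : ℝ → ℝ) (t x : ℝ) :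
    deriv (fun y ↦ Fcoef A ξ a L θ t y) x = deriv θ t * (√ξ * (2 * L + a - x))
      + 2 * (θ t * √ξ) ^ 2 * (2 * L + a - x) + 2 * ξ ^ 2 * x := by
  simp only [Fcoef_eq]
  have hprofile := (hasDerivAt_carlemanProfile A ξ a L x).const_mul (deriv θ t)
  have hdist := (hasDerivAt_id' x).const_sub (2 * L + a)
  have hgrad := ((hdist.const_mul √ξ).const_mul (θ t)).fun_pow 2
  have hpot := ((hasDerivAt_id' x).fun_pow 2).const_mul (ξ ^ 2)
  refine ((hprofile.fun_sub hgrad).fun_add hpot).deriv.trans ?_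
  push_cast
  ring

lemma deriv_Fcoef_time (hθ : DifferentiableAt ℝ θ t) (hθ' : DifferentiableAt ℝ (deriv θ) t) :
    deriv (fun s ↦ Fcoef A ξ a L θ s x) t = deriv (deriv θ) t * carlemanProfile A ξ a L x
      - 2 * θ t * deriv θ t * (√ξ * (2 * L + a - x)) ^ 2 := by
  simp only [Fcoef_eq]
  have hprofile := hθ'.hasDerivAt.mul_const (carlemanProfile A ξ a L x)
  have hgrad := (hθ.hasDerivAt.mul_const (√ξ * (2 * L + a - x))).fun_pow 2
  refine ((hprofile.fun_sub hgrad).add_const (ξ ^ 2 * x ^ 2)).deriv.trans ?_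
  push_cast
  ring

lemma Gcoef_eq (hξ : 0 ≤ ξ) (hθ : DifferentiableAt ℝ θ t)
    (hθ' : DifferentiableAt ℝ (deriv θ) t) :
    Gcoef A ξ a L θ t x = 4 * ξ * (2 * L + a - x) ^ 2 * θ t * (deriv θ t + √ξ * θ t ^ 2)
      + 4 * ξ ^ 2 * √ξ * θ t * x * (2 * L + a - x)
      - deriv (deriv θ) t * carlemanProfile A ξ a L x := by
  rw [Gcoef, iterate_deriv_four_psiW_space, deriv_Fcoef_time hθ hθ', deriv_Fcoef_space,
    deriv_psiW_space]
  linear_combination 4 * (2 * L + a - x) ^ 2 * θ t * (deriv θ t + √ξ * θ t ^ 2) * Real.sq_sqrt hξ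

lemma le_Gcoef (ha : 0 ≤ a) (hx : x ∈ Icc a L) (hξ : 1 ≤ ξ) (hcξ : 4 * c ≤ √ξ)
    (hAξ : c * (|A| + 1 + 2 * L ^ 2) ≤ (L + a) ^ 2 * √ξ)
    (hθ : DifferentiableAt ℝ θ t) (hθ' : DifferentiableAt ℝ (deriv θ) t) (hθ0 : 0 ≤ θ t)
    (hθ'c : |deriv θ t| ≤ c * θ t ^ 2) (hθ''c : |deriv (deriv θ) t| ≤ c * θ t ^ 3) :
    2 * (L + a) ^ 2 * (ξ * √ξ) * θ t ^ 3 ≤ Gcoef A ξ a L θ t x := by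
  have hx0 : 0 ≤ x := ha.trans hx.1
  have hm : L + a ≤ 2 * L + a - x := by linarith [hx.2]
  have hLa : 0 ≤ L + a := by linarith [hx.1, hx.2]
  have hm0 : 0 ≤ 2 * L + a - x := hLa.trans hm
  have hbracket : 3 * √ξ * θ t ^ 2 ≤ 4 * (deriv θ t + √ξ * θ t ^ 2) := by
    have hsqrt : 4 * c * θ t ^ 2 ≤ √ξ * θ t ^ 2 := by gcongr
    linarith [neg_le_of_abs_le hθ'c]
  have hmain : 3 * (L + a) ^ 2 * (ξ * √ξ) * θ t ^ 3
      ≤ 4 * ξ * (2 * L + a - x) ^ 2 * θ t * (deriv θ t + √ξ * θ t ^ 2) :=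
    calc 3 * (L + a) ^ 2 * (ξ * √ξ) * θ t ^ 3
        = ξ * (L + a) ^ 2 * θ t * (3 * √ξ * θ t ^ 2) := by ring
      _ ≤ ξ * (2 * L + a - x) ^ 2 * θ t * (4 * (deriv θ t + √ξ * θ t ^ 2)) := by gcongr
      _ = _ := by ring
  have hprofile : deriv (deriv θ) t * carlemanProfile A ξ a L x
      ≤ (L + a) ^ 2 * (ξ * √ξ) * θ t ^ 3 :=
    calc deriv (deriv θ) t * carlemanProfile A ξ a L x
        ≤ |deriv (deriv θ) t| * |carlemanProfile A ξ a L x| :=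
          (le_abs_self _).trans_eq (abs_mul _ _)
      _ ≤ (c * θ t ^ 3) * ((|A| + 1 + 2 * L ^ 2) * ξ) :=
          mul_le_mul hθ''c (abs_carlemanProfile_le ha hx hξ) (abs_nonneg _)
            ((abs_nonneg _).trans hθ''c)
      _ = c * (|A| + 1 + 2 * L ^ 2) * (ξ * θ t ^ 3) := by ring
      _ ≤ (L + a) ^ 2 * √ξ * (ξ * θ t ^ 3) := by gcongr
      _ = (L + a) ^ 2 * (ξ * √ξ) * θ t ^ 3 := by ring
  have hpot : 0 ≤ 4 * ξ ^ 2 * √ξ * θ t * x * (2 * L + a - x) := by positivity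
  rw [Gcoef_eq (by positivity) hθ hθ']
  linarith

end

theorem carleman_zeroth_order_positivity_general {L a : ℝ} (A c : ℝ) (hL : 0 < L) (ha : 0 ≤ a) :
    ∃ ξ₀ > (0 : ℝ), ∀ ξ ≥ ξ₀, ∀ (θ : ℝ → ℝ) (t : ℝ), DifferentiableAt ℝ θ t →
      DifferentiableAt ℝ (deriv θ) t → 0 ≤ θ t → |deriv θ t| ≤ c * θ t ^ 2 →
      |deriv (deriv θ) t| ≤ c * θ t ^ 3 → ∀ x ∈ Icc a L,
      2 * (L + a) ^ 2 * ξ ^ ((3 : ℝ) / 2) * θ t ^ 3 ≤ Gcoef A ξ a L θ t x := by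
  have hlarge : ∀ᶠ ξ : ℝ in Filter.atTop, 1 ≤ ξ ∧ 4 * c ≤ √ξ ∧
      c * (|A| + 1 + 2 * L ^ 2) ≤ (L + a) ^ 2 * √ξ :=
    (Filter.eventually_ge_atTop 1).and <| (Real.tendsto_sqrt_atTop.eventually_ge_atTop _).and <|
      (Real.tendsto_sqrt_atTop.const_mul_atTop (by positivity)).eventually_ge_atTop _
  obtain ⟨ξ₀, hξ₀⟩ := Filter.eventually_atTop.1 hlarge
  have hξ₀1 : 1 ≤ ξ₀ := (hξ₀ ξ₀ le_rfl).1
  refine ⟨ξ₀, by positivity, fun ξ hξ θ t hθ hθ' hθ0 hθ'c hθ''c x hx ↦ ?_⟩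
  obtain ⟨hξ1, hcξ, hAξ⟩ := hξ₀ ξ hξ
  have hpow : ξ ^ ((3 : ℝ) / 2) = ξ * √ξ := by
    rw [Real.sqrt_eq_rpow, ← Real.rpow_one_add' (by positivity) (by norm_num)]
    norm_num
  rw [hpow]
  exact le_Gcoef ha hx hξ1 hcξ hAξ hθ hθ' hθ0 hθ'c hθ''c

/-- Positivity of the zeroth-order Carleman coefficient: under the stated bounds on
`θ, θ', θ''`, there is `ξ₀ > 0` such that for every `ξ ≥ ξ₀` and every
`(t,x) ∈ (0,T) × (a,L)`, `G(t,x) ≥ 2(L+a)² ξ^{3/2} θ(t)³`. -/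
theorem carleman_zeroth_order_positivity (T L a A c : ℝ) (θ : ℝ → ℝ)
    (hT : 0 < T) (hL : 0 < L) (ha : 0 < a) (haL : a < L) (hA : 0 < A) (hc : 0 < c)
    (hθ : ContDiffOn ℝ 2 θ (Set.Ioo 0 T))
    (hθ1 : ∀ t ∈ Set.Ioo (0 : ℝ) T, 1 ≤ θ t)
    (hθ' : ∀ t ∈ Set.Ioo (0 : ℝ) T, |deriv θ t| ≤ c * (θ t) ^ 2)
    (hθ'' : ∀ t ∈ Set.Ioo (0 : ℝ) T, |deriv (deriv θ) t| ≤ c * (θ t) ^ 3) :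
    ∃ ξ₀ > (0 : ℝ), ∀ ξ ≥ ξ₀, ∀ t ∈ Set.Ioo (0 : ℝ) T, ∀ x ∈ Set.Ioo a L,
      2 * (L + a) ^ 2 * ξ ^ ((3 : ℝ) / 2) * (θ t) ^ 3 ≤ Gcoef A ξ a L θ t x := by
  obtain ⟨ξ₀, hξ₀, hG⟩ := carleman_zeroth_order_positivity_general A c hL ha.le
  refine ⟨ξ₀, hξ₀, fun ξ hξ t ht x hx ↦ ?_⟩
  have hθt : ContDiffAt ℝ 2 θ t := hθ.contDiffAt (isOpen_Ioo.mem_nhds ht)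
  exact hG ξ hξ θ t (hθt.differentiableAt two_ne_zero)
    ((hθt.derivWithin one_add_one_eq_two.le).differentiableAt one_ne_zero)
    (zero_le_one.trans (hθ1 t ht)) (hθ' t ht) (hθ'' t ht) x (Ioo_subset_Icc_self hx)
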